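/- Fix q ∈ (0,1] and let x ∼ N(0,1). Then lim_{u→0} E_x[f_x(u)] / u⁴ = (1/4)(1−q)²q². In particular E_x[f_x(u)] = O(u⁴) as u → 0. -/

import Mathlib

/-!
Put `p = 1 - q`, `s = p u`, `t = -q u` and `W = q e^{s x - s²/2} + p e^{t x - t²/2} - 1`, so that
`f_x(u) = -log (1 + W)`. Under the Gaussian law each exponential has mean `1`, hence `E[W] = 0`,
and `E[W²] = q² e^{s²} + p² e^{t²} + 2pq e^{st} - 1 = p² q² u⁴ / 2 + O(u⁶)`: the `u²` terms cancel
because `q s + p t = 0`.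

The bound `1 + y ≤ e^y` gives `1 + W ≥ 1 - p q u² / 2 ≥ 1/2` for `|u| ≤ 1`, uniformly in `x`, so
`|W - log (1 + W) - W²/2| ≤ 4 |W|³` everywhere (`abs_log_remainder_le`). The same cancellation
`q s + p t = 0` gives `|W| ≤ u² H(x)` with `H(x) = 2 e^{3(|x| + 1)}` (`abs_chiW_le`), and `H³` is
Gaussian integrable. Thus `E[f_x(u)] = E[W²] / 2 + O(u⁶) = p² q² u⁴ / 4 + O(u⁶)`
(`exists_integral_fX_bound`), which contains both claims.
-/

open MeasureTheory ProbabilityTheory Real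

/-- The standard normal density `φ(t) = (2π)^{−1/2}·e^{−t²/2}`. -/
noncomputable def stdphi (t : ℝ) : ℝ := (Real.sqrt (2 * π))⁻¹ * Real.exp (-t ^ 2 / 2)

/-- `f_x(u) = ln( φ(x) / ( q·φ(x − (1−q)u) + (1−q)·φ(x + qu) ) )`. -/
noncomputable def fX (q x u : ℝ) : ℝ :=
  Real.log (stdphi x / (q * stdphi (x - (1 - q) * u) + (1 - q) * stdphi (x + q * u)))

/-- The likelihood ratio `φ(x - s) / φ(x) = e^{s x - s²/2}`. -/
noncomputable def gaussRatio (s x : ℝ) : ℝ := Real.exp (s * x - s ^ 2 / 2)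

/-- The likelihood ratio of the two-point mixture to `N(0,1)`, minus one. -/
noncomputable def chiW (q u x : ℝ) : ℝ :=
  q * gaussRatio ((1 - q) * u) x + (1 - q) * gaussRatio (-(q * u)) x - 1

lemma continuous_gaussRatio (s : ℝ) : Continuous (gaussRatio s) := by
  unfold gaussRatio; fun_prop

lemma continuous_chiW (q u : ℝ) : Continuous (chiW q u) := by
  have h1 := continuous_gaussRatio ((1 - q) * u)
  have h2 := continuous_gaussRatio (-(q * u))
  unfold chiW; fun_prop

lemma gaussRatio_eq (s : ℝ) :
    gaussRatio s = fun x => Real.exp (-(s ^ 2 / 2)) * Real.exp (s * x) := by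
  funext x; rw [gaussRatio, ← Real.exp_add]; ring_nf

lemma integrable_gaussRatio (s : ℝ) : Integrable (gaussRatio s) (gaussianReal 0 1) := by
  rw [gaussRatio_eq]
  exact (integrable_exp_mul_gaussianReal s).const_mul _

lemma integral_gaussRatio (s : ℝ) : ∫ x, gaussRatio s x ∂(gaussianReal 0 1) = 1 := by
  have h : ∫ x, Real.exp (s * x) ∂(gaussianReal 0 1) = Real.exp (s ^ 2 / 2) := by
    have := congrFun (mgf_id_gaussianReal (μ := 0) (v := 1)) s
    simpa [mgf] using this
  rw [gaussRatio_eq, integral_const_mul, h, ← Real.exp_add]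
  simp

lemma gaussRatio_mul (s t x : ℝ) :
    gaussRatio s x * gaussRatio t x = Real.exp (s * t) * gaussRatio (s + t) x := by
  simp only [gaussRatio, ← Real.exp_add]; ring_nf

lemma integrable_chiW (q u : ℝ) : Integrable (chiW q u) (gaussianReal 0 1) :=
  (((integrable_gaussRatio _).const_mul _).add ((integrable_gaussRatio _).const_mul _)).sub
    (integrable_const 1)

lemma integral_chiW (q u : ℝ) : ∫ x, chiW q u x ∂(gaussianReal 0 1) = 0 := by
  have h1 := (integrable_gaussRatio ((1 - q) * u)).const_mul q
  have h2 := (integrable_gaussRatio (-(q * u))).const_mul (1 - q)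
  unfold chiW
  rw [integral_sub (h1.fun_add h2) (integrable_const 1), integral_add h1 h2]
  simp [integral_const_mul, integral_gaussRatio]

lemma chiW_sq (q u x : ℝ) :
    chiW q u x ^ 2 =
      q ^ 2 * Real.exp (((1 - q) * u) ^ 2) * gaussRatio (2 * ((1 - q) * u)) x
      + (1 - q) ^ 2 * Real.exp ((q * u) ^ 2) * gaussRatio (2 * (-(q * u))) x
      + 2 * q * (1 - q) * Real.exp (-(q * (1 - q) * u ^ 2)) *
          gaussRatio ((1 - q) * u + -(q * u)) x
      - 2 * chiW q u x - 1 := by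
  have h1 := gaussRatio_mul ((1 - q) * u) ((1 - q) * u) x
  have h2 := gaussRatio_mul (-(q * u)) (-(q * u)) x
  have h3 := gaussRatio_mul ((1 - q) * u) (-(q * u)) x
  rw [← two_mul, ← sq, ← sq ((1 - q) * u)] at h1
  rw [← two_mul, ← sq, neg_mul_neg, ← sq (q * u)] at h2
  rw [show (1 - q) * u * -(q * u) = -(q * (1 - q) * u ^ 2) by ring] at h3
  rw [mul_assoc (q ^ 2), mul_assoc ((1 - q) ^ 2), mul_assoc (2 * q * (1 - q)), ← h1, ← h2, ← h3]
  unfold chiW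
  ring

lemma integrable_chiW_sq (q u : ℝ) :
    Integrable (fun x => chiW q u x ^ 2) (gaussianReal 0 1) := by
  simp only [chiW_sq]
  exact ((((((integrable_gaussRatio _).const_mul _).add ((integrable_gaussRatio _).const_mul _)).add
    ((integrable_gaussRatio _).const_mul _)).sub ((integrable_chiW q u).const_mul 2)).sub
    (integrable_const 1))

lemma integral_chiW_sq (q u : ℝ) :
    ∫ x, chiW q u x ^ 2 ∂(gaussianReal 0 1) =
      q ^ 2 * Real.exp (((1 - q) * u) ^ 2) + (1 - q) ^ 2 * Real.exp ((q * u) ^ 2)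
      + 2 * q * (1 - q) * Real.exp (-(q * (1 - q) * u ^ 2)) - 1 := by
  have h1 := (integrable_gaussRatio (2 * ((1 - q) * u))).const_mul
    (q ^ 2 * Real.exp (((1 - q) * u) ^ 2))
  have h2 := (integrable_gaussRatio (2 * (-(q * u)))).const_mul
    ((1 - q) ^ 2 * Real.exp ((q * u) ^ 2))
  have h3 := (integrable_gaussRatio ((1 - q) * u + -(q * u))).const_mul
    (2 * q * (1 - q) * Real.exp (-(q * (1 - q) * u ^ 2)))
  have h4 := (integrable_chiW q u).const_mul 2
  simp only [chiW_sq]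
  rw [integral_sub (by exact ((h1.add h2).add h3).sub h4) (integrable_const 1),
    integral_sub ((h1.fun_add h2).fun_add h3) h4, integral_add (h1.fun_add h2) h3, integral_add h1 h2]
  simp [integral_const_mul, integral_gaussRatio, integral_chiW]

lemma abs_exp_quadratic_le {z : ℝ} (hz : |z| ≤ 1) :
    |Real.exp z - (1 + z + z ^ 2 / 2)| ≤ |z| ^ 3 := by
  have h := Real.exp_bound hz (n := 3) (by norm_num)
  norm_num [Finset.sum_range_succ, Nat.factorial] at h
  have h0 : 0 ≤ |z| ^ 3 := by positivity
  linarith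

lemma abs_exp_linear_le (y : ℝ) : |Real.exp y - 1 - y| ≤ y ^ 2 * Real.exp |y| := by
  have h := Complex.norm_exp_sub_sum_le_norm_mul_exp (y : ℂ) 2
  simp only [Finset.sum_range_succ, Finset.sum_range_zero] at h
  norm_num at h
  rw [← Complex.ofReal_exp, ← Complex.ofReal_one, ← Complex.ofReal_add, ← Complex.ofReal_sub,
    Complex.norm_real, Real.norm_eq_abs, ← sub_sub] at h
  simpa using h

/-- First-order expansion of the likelihood ratio, with an explicit envelope in `x`. -/
lemma abs_gaussRatio_sub_le {s : ℝ} (hs : |s| ≤ 1) (x : ℝ) :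
    |gaussRatio s x - 1 - s * x| ≤ s ^ 2 * (2 * Real.exp (3 * (|x| + 1))) := by
  set a := |x| + 1 with ha
  have ha1 : 1 ≤ a := by have := abs_nonneg x; linarith
  have hy : |s * x - s ^ 2 / 2| ≤ |s| * a := by
    calc |s * x - s ^ 2 / 2| ≤ |s * x| + |s ^ 2 / 2| := abs_sub _ _
      _ = |s| * |x| + |s| * |s| / 2 := by
          rw [abs_mul, abs_of_nonneg (by positivity : (0:ℝ) ≤ s ^ 2 / 2), ← sq_abs s, sq]
      _ ≤ |s| * a := by nlinarith [abs_nonneg s]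
  have hya : |s * x - s ^ 2 / 2| ≤ a := hy.trans (by nlinarith)
  have hy2 : (s * x - s ^ 2 / 2) ^ 2 ≤ s ^ 2 * a ^ 2 := by
    calc (s * x - s ^ 2 / 2) ^ 2 = |s * x - s ^ 2 / 2| ^ 2 := (sq_abs _).symm
      _ ≤ (|s| * a) ^ 2 := by gcongr
      _ = s ^ 2 * a ^ 2 := by rw [mul_pow, sq_abs]
  have h1 := abs_exp_linear_le (s * x - s ^ 2 / 2)
  have h2 : (s * x - s ^ 2 / 2) ^ 2 * Real.exp |s * x - s ^ 2 / 2|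
      ≤ s ^ 2 * a ^ 2 * Real.exp a := by gcongr
  have h3 : a ^ 2 * Real.exp a ≤ Real.exp (3 * a) := by
    have : a ≤ Real.exp a := by linarith [Real.add_one_le_exp a]
    calc a ^ 2 * Real.exp a ≤ Real.exp a ^ 2 * Real.exp a := by gcongr
      _ = Real.exp (3 * a) := by rw [← pow_succ, ← Real.exp_nat_mul]; norm_num
  have h4 : 1 ≤ Real.exp (3 * a) := Real.one_le_exp (by linarith)
  have h5 : s ^ 2 * a ^ 2 * Real.exp a ≤ s ^ 2 * Real.exp (3 * a) := by
    rw [mul_assoc]; gcongr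
  have h6 : s ^ 2 * 1 ≤ s ^ 2 * Real.exp (3 * a) := by gcongr
  unfold gaussRatio
  rw [abs_le] at h1 ⊢
  constructor <;> nlinarith [sq_nonneg s]

lemma abs_chiW_le {q u : ℝ} (hq0 : 0 ≤ q) (hq1 : q ≤ 1) (hu : |u| ≤ 1) (x : ℝ) :
    |chiW q u x| ≤ u ^ 2 * (2 * Real.exp (3 * (|x| + 1))) := by
  set H := 2 * Real.exp (3 * (|x| + 1)) with hH
  have hH0 : 0 ≤ H := by positivity
  have hp0 : 0 ≤ 1 - q := by linarith
  have key : ∀ r : ℝ, |r| ≤ 1 → |gaussRatio (r * u) x - 1 - r * u * x| ≤ u ^ 2 * H := by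
    intro r hr
    have hru : |r * u| ≤ 1 := by rw [abs_mul]; exact mul_le_one₀ hr (abs_nonneg _) hu
    refine (abs_gaussRatio_sub_le hru x).trans ?_
    have : r ^ 2 ≤ 1 := by rw [← sq_abs]; exact pow_le_one₀ (abs_nonneg _) hr
    rw [mul_pow]
    gcongr
    nlinarith [sq_nonneg u]
  have h1 := key (1 - q) (by rw [abs_le]; constructor <;> linarith)
  have h2 := key (-q) (by rw [abs_le]; constructor <;> linarith)
  -- The linear terms cancel: `q (1 - q) u x - (1 - q) q u x = 0`.
  have hW : chiW q u x = q * (gaussRatio ((1 - q) * u) x - 1 - (1 - q) * u * x)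
      + (1 - q) * (gaussRatio (-q * u) x - 1 - -q * u * x) := by
    rw [chiW, ← neg_mul]; ring
  rw [hW]
  refine (abs_add_le _ _).trans ?_
  rw [abs_mul, abs_mul, abs_of_nonneg hq0, abs_of_nonneg hp0]
  nlinarith [mul_le_mul_of_nonneg_left h1 hq0, mul_le_mul_of_nonneg_left h2 hp0]

lemma neg_half_le_chiW {q u : ℝ} (hq0 : 0 ≤ q) (hq1 : q ≤ 1) (hu : |u| ≤ 1) (x : ℝ) :
    -(1 / 2) ≤ chiW q u x := by
  have hp0 : 0 ≤ 1 - q := by linarith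
  have h1 := mul_le_mul_of_nonneg_left
    (Real.add_one_le_exp ((1 - q) * u * x - ((1 - q) * u) ^ 2 / 2)) hq0
  have h2 := mul_le_mul_of_nonneg_left
    (Real.add_one_le_exp (-(q * u) * x - (-(q * u)) ^ 2 / 2)) hp0
  have hu2 : u ^ 2 ≤ 1 := by rw [← sq_abs]; exact pow_le_one₀ (abs_nonneg _) hu
  have h3 : q * (1 - q) * u ^ 2 ≤ 1 := by
    have : q * (1 - q) ≤ 1 := by nlinarith
    exact mul_le_one₀ this (sq_nonneg u) hu2
  unfold chiW gaussRatio
  nlinarith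

lemma abs_log_remainder_le {w : ℝ} (hw : -(1 / 2) ≤ w) :
    |w - Real.log (1 + w) - w ^ 2 / 2| ≤ 4 * |w| ^ 3 := by
  rcases le_or_gt w (1 / 2) with h | h
  · have hw' : |-w| ≤ 1 / 2 := by rw [abs_neg, abs_le]; exact ⟨hw, h⟩
    have hb := Real.abs_log_sub_add_sum_range_le (x := -w) (by linarith) 2
    norm_num [Finset.sum_range_succ] at hb
    rw [abs_neg] at hw'
    have h3 : |w| ^ 3 / (1 - |w|) ≤ 4 * |w| ^ 3 := by
      rw [div_le_iff₀ (by linarith)]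
      nlinarith [pow_nonneg (abs_nonneg w) 3]
    refine le_trans (le_of_eq ?_) (hb.trans h3)
    rw [← abs_neg]; congr 1; ring
  · have hl1 : Real.log (1 + w) ≤ w := by
      linarith [Real.log_le_sub_one_of_pos (show 0 < 1 + w by linarith)]
    have hl0 : 0 ≤ Real.log (1 + w) := Real.log_nonneg (by linarith)
    rw [abs_of_pos (by linarith : 0 < w), abs_le]
    have h3 : w ^ 2 / 2 ≤ w ^ 3 := by nlinarith [sq_nonneg w]
    constructor <;> nlinarith [sq_nonneg w]

lemma fX_eq {q : ℝ} (u x : ℝ) : fX q x u = -Real.log (1 + chiW q u x) := by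
  have hc : (Real.sqrt (2 * π))⁻¹ ≠ 0 := by positivity
  have h1 : stdphi (x - (1 - q) * u) = stdphi x * gaussRatio ((1 - q) * u) x := by
    rw [stdphi, stdphi, gaussRatio, mul_assoc, ← Real.exp_add]; ring_nf
  have h2 : stdphi (x + q * u) = stdphi x * gaussRatio (-(q * u)) x := by
    rw [stdphi, stdphi, gaussRatio, mul_assoc, ← Real.exp_add]; ring_nf
  have h0 : stdphi x ≠ 0 := mul_ne_zero hc (Real.exp_ne_zero _)
  rw [fX, h1, h2, ← Real.log_inv]
  congr 1
  have : q * (stdphi x * gaussRatio ((1 - q) * u) x)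
      + (1 - q) * (stdphi x * gaussRatio (-(q * u)) x) = stdphi x * (1 + chiW q u x) := by
    unfold chiW; ring
  rw [this, div_mul_eq_div_div, div_self h0, one_div]

lemma abs_integral_chiW_sq_sub_le {q u : ℝ} (hq0 : 0 ≤ q) (hq1 : q ≤ 1) (hu : |u| ≤ 1) :
    |∫ x, chiW q u x ^ 2 ∂(gaussianReal 0 1) - (1 - q) ^ 2 * q ^ 2 * u ^ 4 / 2| ≤ 4 * u ^ 6 := by
  have hp0 : 0 ≤ 1 - q := by linarith
  have hu2 : u ^ 2 ≤ 1 := by rw [← sq_abs]; exact pow_le_one₀ (abs_nonneg _) hu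
  have key : ∀ c r : ℝ, 0 ≤ c → c ≤ 2 → |r| ≤ 1 →
      |c * (Real.exp (r * u ^ 2) - (1 + r * u ^ 2 + (r * u ^ 2) ^ 2 / 2))| ≤ c * u ^ 6 := by
    intro c r hc0 hc hr
    have hz : |r * u ^ 2| ≤ u ^ 2 := by
      rw [abs_mul, abs_of_nonneg (sq_nonneg u)]
      exact mul_le_of_le_one_left (sq_nonneg u) hr
    rw [abs_mul, abs_of_nonneg hc0]
    refine mul_le_mul_of_nonneg_left ((abs_exp_quadratic_le (hz.trans hu2)).trans ?_) hc0
    calc |r * u ^ 2| ^ 3 ≤ (u ^ 2) ^ 3 := by gcongr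
      _ = u ^ 6 := by ring
  have hqq : q ^ 2 ≤ 1 := pow_le_one₀ hq0 hq1
  have hpp : (1 - q) ^ 2 ≤ 1 := pow_le_one₀ hp0 (by linarith)
  have hpq0 : 0 ≤ q * (1 - q) := mul_nonneg hq0 hp0
  have hpq : q * (1 - q) ≤ 1 := by nlinarith
  have h1 := key (q ^ 2) ((1 - q) ^ 2) (by positivity) (by linarith)
    (by rwa [abs_of_nonneg (by positivity)])
  have h2 := key ((1 - q) ^ 2) (q ^ 2) (by positivity) (by linarith)
    (by rwa [abs_of_nonneg (by positivity)])
  have h3 := key (2 * q * (1 - q)) (-(q * (1 - q))) (by linarith) (by linarith)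
    (by rwa [abs_neg, abs_of_nonneg hpq0])
  rw [integral_chiW_sq, mul_pow, mul_pow, ← neg_mul]
  have hu6 : 0 ≤ u ^ 6 := by positivity
  have hsum : q ^ 2 * u ^ 6 + (1 - q) ^ 2 * u ^ 6 + 2 * q * (1 - q) * u ^ 6 ≤ 4 * u ^ 6 := by
    nlinarith
  refine le_trans (le_trans (le_of_eq ?_) (abs_add_three _ _ _))
    ((add_le_add (add_le_add h1 h2) h3).trans hsum)
  congr 1
  ring

lemma exists_integral_fX_bound {q : ℝ} (hq0 : 0 ≤ q) (hq1 : q ≤ 1) :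
    ∃ C : ℝ, ∀ u : ℝ, |u| ≤ 1 →
      |∫ x, fX q x u ∂(gaussianReal 0 1) - (1 / 4) * (1 - q) ^ 2 * q ^ 2 * u ^ 4| ≤ C * u ^ 6 := by
  set H : ℝ → ℝ := fun x => 4 * (2 * Real.exp (3 * (|x| + 1))) ^ 3 with hH
  have hHint : Integrable H (gaussianReal 0 1) := by
    have h := (integrable_exp_mul_abs (X := fun x : ℝ => x) (μ := gaussianReal 0 1) (t := 9)
      (integrable_exp_mul_gaussianReal 9) (integrable_exp_mul_gaussianReal (-9))).const_mul
      (32 * Real.exp 9)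
    convert h using 2 with x
    rw [hH]
    simp only [mul_pow, ← Real.exp_nat_mul]
    rw [mul_assoc 32, ← Real.exp_add]
    push_cast
    ring_nf
  refine ⟨(∫ x, H x ∂(gaussianReal 0 1)) + 2, fun u hu => ?_⟩
  set R : ℝ → ℝ := fun x => chiW q u x - Real.log (1 + chiW q u x) - chiW q u x ^ 2 / 2 with hR
  have hRle : ∀ x, |R x| ≤ u ^ 6 * H x := by
    intro x
    refine (abs_log_remainder_le (neg_half_le_chiW hq0 hq1 hu x)).trans ?_
    calc 4 * |chiW q u x| ^ 3 ≤ 4 * (u ^ 2 * (2 * Real.exp (3 * (|x| + 1)))) ^ 3 := by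
          gcongr; exact abs_chiW_le hq0 hq1 hu x
      _ = u ^ 6 * H x := by rw [hH]; ring
  have hcont := continuous_chiW q u
  have hRint : Integrable R (gaussianReal 0 1) := by
    refine (hHint.const_mul (u ^ 6)).mono' ?_ (Filter.Eventually.of_forall hRle)
    have hm : Measurable R := by
      have := hcont.measurable
      fun_prop
    exact hm.aestronglyMeasurable
  have hRI : |∫ x, R x ∂(gaussianReal 0 1)| ≤ u ^ 6 * ∫ x, H x ∂(gaussianReal 0 1) := by
    rw [← integral_const_mul]
    exact norm_integral_le_of_norm_le (f := R) (hHint.const_mul (u ^ 6)) (Filter.Eventually.of_forall hRle)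
  have hI : ∫ x, fX q x u ∂(gaussianReal 0 1) =
      (∫ x, R x ∂(gaussianReal 0 1)) + (∫ x, chiW q u x ^ 2 ∂(gaussianReal 0 1)) / 2 := by
    have : ∀ x, fX q x u = R x + chiW q u x ^ 2 / 2 - chiW q u x := by
      intro x; rw [fX_eq, hR]; ring
    simp only [this]
    have hsq := (integrable_chiW_sq q u).div_const 2
    rw [integral_sub (hRint.fun_add hsq) (integrable_chiW q u), integral_add hRint hsq,
      integral_chiW, integral_div, sub_zero]
  have hS := abs_integral_chiW_sq_sub_le hq0 hq1 hu
  rw [hI]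
  rw [abs_le] at hRI hS ⊢
  constructor <;> linarith

open Filter Topology Asymptotics in
/-- For `x ∼ N(0,1)`, `E_x[f_x(u)]/u⁴ → (1/4)(1−q)²q²` as `u → 0`; in particular
`E_x[f_x(u)] = O(u⁴)` as `u → 0`. -/
theorem integral_fX_div_u4_tendsto (q : ℝ) (hq : q ∈ Set.Ioc (0 : ℝ) 1) :
    Tendsto (fun u : ℝ => (∫ x, fX q x u ∂(gaussianReal 0 1)) / u ^ 4) (𝓝[≠] 0)
        (𝓝 ((1 / 4) * (1 - q) ^ 2 * q ^ 2)) ∧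
      (fun u : ℝ => ∫ x, fX q x u ∂(gaussianReal 0 1)) =O[𝓝 0] fun u : ℝ => u ^ 4 := by
  obtain ⟨C, hC⟩ := exists_integral_fX_bound hq.1.le hq.2
  have hnear : ∀ᶠ u : ℝ in 𝓝 0, |u| ≤ 1 := by
    filter_upwards [Metric.closedBall_mem_nhds (0 : ℝ) one_pos] with u hu
    simpa using hu
  constructor
  · rw [tendsto_iff_norm_sub_tendsto_zero]
    have hlim : Tendsto (fun u : ℝ => C * u ^ 2) (𝓝[≠] 0) (𝓝 0) := by
      have : Continuous fun u : ℝ => C * u ^ 2 := by fun_prop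
      simpa using (this.tendsto 0).mono_left nhdsWithin_le_nhds
    refine squeeze_zero' (Eventually.of_forall fun _ => norm_nonneg _) ?_ hlim
    filter_upwards [hnear.filter_mono nhdsWithin_le_nhds, self_mem_nhdsWithin] with u hu hu0
    have hu4 : 0 < u ^ 4 := by
      have : u ≠ 0 := hu0
      positivity
    rw [Real.norm_eq_abs, div_sub' hu4.ne', abs_div, abs_of_pos hu4, div_le_iff₀ hu4]
    calc _ = |∫ x, fX q x u ∂(gaussianReal 0 1) - (1 / 4) * (1 - q) ^ 2 * q ^ 2 * u ^ 4| := by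
          congr 1; ring
      _ ≤ C * u ^ 6 := hC u hu
      _ = C * u ^ 2 * u ^ 4 := by ring
  · have h1 : (fun u : ℝ => ∫ x, fX q x u ∂(gaussianReal 0 1)
        - (1 / 4) * (1 - q) ^ 2 * q ^ 2 * u ^ 4) =O[𝓝 0] fun u : ℝ => u ^ 4 := by
      refine IsBigO.of_bound |C| ?_
      filter_upwards [hnear] with u hu
      have hu2 : u ^ 2 ≤ 1 := by rw [← sq_abs]; exact pow_le_one₀ (abs_nonneg _) hu
      rw [Real.norm_eq_abs, Real.norm_eq_abs, abs_of_nonneg (by positivity : (0:ℝ) ≤ u ^ 4)]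
      calc _ ≤ C * u ^ 6 := hC u hu
        _ ≤ |C| * u ^ 6 := by gcongr; exact le_abs_self C
        _ = |C| * u ^ 4 * u ^ 2 := by ring
        _ ≤ |C| * u ^ 4 := mul_le_of_le_one_right (by positivity) hu2
    have h2 : (fun u : ℝ => (1 / 4) * (1 - q) ^ 2 * q ^ 2 * u ^ 4) =O[𝓝 0] fun u : ℝ => u ^ 4 :=
      (isBigO_refl _ _).const_mul_left _
    simpa using h1.add h2
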